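/- Let β be a real number, let β' be a nonzero real number, and let f ∈ 𝓢(ℝ², ℂ). Then for every ρ'' ∈ ℝ², H_{β'}[K_β[f]](ρ'') = e^{2β'}·K_{β−β'}[f](ρ''), where the outer transformation H_{β'} is applied to the function ρ' ↦ K_β[f](ρ'). That is, H_{β'} ∘ K_β = e^{2β'}·K_{β−β'}. -/

import Mathlib

open MeasureTheory Filter
open scoped RealInnerProductSpace

noncomputable section

/-- The Euclidean plane `ℝ²`. -/
abbrev Plane := EuclideanSpace ℝ (Fin 2)

/-- Hyperbolic fractional-order Fourier transformation of the first kind of order `β`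
(for `β ≠ 0`), with `coth β = cosh β / sinh β`. -/
def fracH (β : ℝ) (f : Plane → ℂ) (ρ' : Plane) : ℂ :=
  Complex.I * Real.exp β / Real.sinh β *
    Complex.exp (-(Complex.I * Real.pi * ‖ρ'‖ ^ 2 * (Real.cosh β / Real.sinh β))) *
    ∫ ρ : Plane,
      Complex.exp (-(Complex.I * Real.pi * ‖ρ‖ ^ 2 * (Real.cosh β / Real.sinh β))) *
      Complex.exp (2 * Real.pi * Complex.I * ⟪ρ', ρ⟫ / Real.sinh β) * f ρ

/-- Hyperbolic fractional-order Fourier transformation of the second kind of order `β`. -/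
def fracK (β : ℝ) (f : Plane → ℂ) (ρ' : Plane) : ℂ :=
  Complex.I * Real.exp β / Real.cosh β *
    Complex.exp (Complex.I * Real.pi * ‖ρ'‖ ^ 2 * Real.tanh β) *
    ∫ ρ : Plane,
      Complex.exp (-(Complex.I * Real.pi * ‖ρ‖ ^ 2 * Real.tanh β)) *
      Complex.exp (2 * Real.pi * Complex.I * ⟪ρ', ρ⟫ / Real.cosh β) * f ρ

/-- The character `t ↦ exp (it)` has temperate growth. -/
theorem hasTemperateGrowth_cexp_ofReal_mul_I :
    Function.HasTemperateGrowth (fun t : ℝ => Complex.exp (t * Complex.I)) := by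
  have hderiv (t : ℝ) : HasDerivAt (fun t : ℝ => Complex.exp (t * Complex.I))
      (Complex.exp (t * Complex.I) * Complex.I) t := by
    simpa using ((Complex.ofRealCLM.hasDerivAt (x := t)).mul_const Complex.I).cexp
  have hiter (n : ℕ) : iteratedDeriv n (fun t : ℝ => Complex.exp (t * Complex.I)) =
      fun t : ℝ => Complex.exp (t * Complex.I) * Complex.I ^ n := by
    induction n with
    | zero => simp
    | succ n ih =>
      rw [iteratedDeriv_succ, ih]
      funext t
      rw [((hderiv t).mul_const _).deriv]
      ring
  refine ⟨(Complex.ofRealCLM.contDiff.mul contDiff_const).cexp, fun n => ⟨0, 1, fun t => ?_⟩⟩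
  rw [norm_iteratedFDeriv_eq_norm_iteratedDeriv, hiter]
  simp [Complex.norm_exp_ofReal_mul_I]

/-- The chirp `x ↦ exp (-iπ‖x‖²a)` has temperate growth. -/
theorem hasTemperateGrowth_chirp (a : ℝ) :
    Function.HasTemperateGrowth
      (fun x : Plane => Complex.exp (-(Complex.I * Real.pi * ‖x‖ ^ 2 * a))) := by
  have h : Function.HasTemperateGrowth (fun x : Plane => -(Real.pi * a) * ‖x‖ ^ 2) := by fun_prop
  convert hasTemperateGrowth_cexp_ofReal_mul_I.comp h using 1
  funext x
  simp only [Function.comp]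
  congr 1
  push_cast
  ring

/-- The scaled inverse Fourier transform of a chirped Schwartz function is integrable. -/
theorem integrable_integral_chirp (a : ℝ) {k : ℝ} (hk : k ≠ 0) (f : SchwartzMap Plane ℂ) :
    Integrable (fun x : Plane => ∫ ρ : Plane, Complex.exp (2 * Real.pi * Complex.I * ⟪x, ρ⟫ * k) *
      (Complex.exp (-(Complex.I * Real.pi * ‖ρ‖ ^ 2 * a)) * f ρ)) := by
  have h := ((FourierTransform.fourierInv (SchwartzMap.smulLeftCLM ℂ
    (fun x : Plane => Complex.exp (-(Complex.I * Real.pi * ‖x‖ ^ 2 * a))) f)).integrable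
      (μ := volume)).comp_smul hk
  convert h using 2 with x
  rw [SchwartzMap.fourierInv_coe, Real.fourierInv_eq']
  congr 1
  funext ρ
  rw [SchwartzMap.smulLeftCLM_apply_apply (hasTemperateGrowth_chirp a), smul_eq_mul, smul_eq_mul,
    real_inner_smul_right, real_inner_comm]
  congr 2
  push_cast
  ring

theorem integral_gaussian_mul_character {b : ℂ} (hb : 0 < b.re) (v : Plane) :
    ∫ x : Plane, Complex.exp (-(Real.pi * b * ‖x‖ ^ 2) + 2 * Real.pi * Complex.I * ⟪v, x⟫) =
      b⁻¹ * Complex.exp (-(Real.pi * ‖v‖ ^ 2 / b)) := by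
  have hb0 : b ≠ 0 := by rintro rfl; simp at hb
  have hpi : (Real.pi : ℂ) ≠ 0 := by exact_mod_cast Real.pi_ne_zero
  have hpb : 0 < (Real.pi * b).re := by simpa using mul_pos Real.pi_pos hb
  have h := GaussianFourier.integral_cexp_neg_mul_sq_norm_add hpb (2 * Real.pi * Complex.I) v
  rw [finrank_euclideanSpace_fin] at h
  simp only [neg_mul] at h
  rw [h]
  congr 1
  · norm_num
    field_simp
  · congr 1
    field_simp
    rw [Complex.I_sq]
    ring

theorem integrable_gaussian {b : ℂ} (hb : 0 < b.re) :
    Integrable (fun x : Plane => Complex.exp (-(Real.pi * b * ‖x‖ ^ 2))) := by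
  have hpb : 0 < (Real.pi * b).re := by simpa using mul_pos Real.pi_pos hb
  simpa using GaussianFourier.integrable_cexp_neg_mul_sq_norm_add hpb 0 (0 : Plane)

theorem norm_character (t : ℝ) : ‖Complex.exp (2 * Real.pi * Complex.I * t)‖ = 1 := by
  simp [Complex.norm_exp]

/-- Pairing of a modulated Gaussian with a scaled inverse Fourier transform. -/
theorem integral_gaussian_mul_integral {b : ℂ} (hb : 0 < b.re) (k : ℝ) (w : Plane) {g : Plane → ℂ}
    (hg : Integrable g) :
    ∫ x : Plane, Complex.exp (-(Real.pi * b * ‖x‖ ^ 2)) *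
        Complex.exp (2 * Real.pi * Complex.I * ⟪w, x⟫) *
        ∫ ρ : Plane, Complex.exp (2 * Real.pi * Complex.I * ⟪x, ρ⟫ * k) * g ρ =
      ∫ ρ : Plane, b⁻¹ * Complex.exp (-(Real.pi * ‖w + k • ρ‖ ^ 2 / b)) * g ρ := by
  simp_rw [← integral_const_mul]
  rw [integral_integral_swap]
  · congr 1
    funext ρ
    rw [← integral_gaussian_mul_character hb, ← integral_mul_const]
    congr 1
    funext x
    rw [inner_add_left, real_inner_smul_left, real_inner_comm x ρ, ← mul_assoc,
      ← Complex.exp_add, ← Complex.exp_add]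
    congr 2
    push_cast
    ring
  · refine ((integrable_gaussian hb).mul_prod hg).mono ?_ (Eventually.of_forall fun p => ?_)
    · have := hg.aestronglyMeasurable.comp_snd (μ := (volume : Measure Plane))
      refine AEStronglyMeasurable.mul (Continuous.aestronglyMeasurable (by fun_prop))
        (AEStronglyMeasurable.mul (Continuous.aestronglyMeasurable (by fun_prop)) this)
    · simp only [Function.uncurry, norm_mul, norm_character]
      rw [mul_assoc _ _ (k : ℂ), ← Complex.ofReal_mul, norm_character, one_mul, mul_one]

theorem tendsto_integral_gaussian_regularization (a : ℝ) (w : Plane) {G : Plane → ℂ}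
    (hG : Integrable G) :
    Tendsto (fun ε : ℝ => ∫ x : Plane,
        Complex.exp (-(Real.pi * (ε + Complex.I * a) * ‖x‖ ^ 2)) *
          Complex.exp (2 * Real.pi * Complex.I * ⟪w, x⟫) * G x)
      (nhdsWithin 0 (Set.Ioi 0))
      (nhds (∫ x : Plane, Complex.exp (-(Real.pi * (Complex.I * a) * ‖x‖ ^ 2)) *
        Complex.exp (2 * Real.pi * Complex.I * ⟪w, x⟫) * G x)) := by
  refine tendsto_integral_filter_of_dominated_convergence (fun x => ‖G x‖)
    (Eventually.of_forall fun ε => ?_) ?_ hG.norm (Eventually.of_forall fun x => ?_)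
  · exact (Continuous.aestronglyMeasurable (by fun_prop)).mul hG.aestronglyMeasurable
  · filter_upwards [self_mem_nhdsWithin] with ε hε
    refine Eventually.of_forall fun x => ?_
    rw [norm_mul, norm_mul, norm_character, mul_one]
    refine mul_le_of_le_one_left (norm_nonneg _) ?_
    have hre : (-(Real.pi * (ε + Complex.I * a) * (‖x‖ : ℂ) ^ 2)).re =
        -(Real.pi * ε * ‖x‖ ^ 2) := by
      rw [← Complex.ofReal_pow, Complex.neg_re, Complex.re_mul_ofReal, Complex.re_ofReal_mul]
      simp
    rw [Complex.norm_exp, Real.exp_le_one_iff, hre]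
    have := Real.pi_pos
    have : 0 < ε := hε
    exact neg_nonpos.2 (by positivity)
  · have hcont : Continuous fun ε : ℝ =>
        Complex.exp (-(Real.pi * (ε + Complex.I * a) * ‖x‖ ^ 2)) *
          Complex.exp (2 * Real.pi * Complex.I * ⟪w, x⟫) * G x := by fun_prop
    simpa using (hcont.tendsto 0).mono_left nhdsWithin_le_nhds

theorem tendsto_integral_gaussian_inv_regularization {a : ℝ} (ha : a ≠ 0) (k : ℝ) (w : Plane)
    {g : Plane → ℂ} (hg : Integrable g) :
    Tendsto (fun ε : ℝ => ∫ ρ : Plane, (ε + Complex.I * a)⁻¹ *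
        Complex.exp (-(Real.pi * ‖w + k • ρ‖ ^ 2 / (ε + Complex.I * a))) * g ρ)
      (nhdsWithin 0 (Set.Ioi 0))
      (nhds (∫ ρ : Plane, (Complex.I * a)⁻¹ *
        Complex.exp (-(Real.pi * ‖w + k • ρ‖ ^ 2 / (Complex.I * a))) * g ρ)) := by
  refine tendsto_integral_filter_of_dominated_convergence (fun ρ => |a|⁻¹ * ‖g ρ‖)
    (Eventually.of_forall fun ε => ?_) ?_ (hg.norm.const_mul _)
    (Eventually.of_forall fun ρ => ?_)
  · exact (Continuous.aestronglyMeasurable (by fun_prop)).mul hg.aestronglyMeasurable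
  · filter_upwards [self_mem_nhdsWithin] with ε hε
    refine Eventually.of_forall fun ρ => ?_
    rw [norm_mul, norm_mul, norm_inv]
    gcongr
    refine (mul_le_of_le_one_right (by positivity) ?_).trans ?_
    · rw [Complex.norm_exp, Real.exp_le_one_iff, ← Complex.ofReal_pow, ← Complex.ofReal_mul,
        div_eq_mul_inv, Complex.neg_re, Complex.re_ofReal_mul, Complex.inv_re]
      have hre : ((ε : ℂ) + Complex.I * a).re = ε := by simp
      have := Real.pi_pos
      have := Complex.normSq_nonneg (ε + Complex.I * a)
      have : 0 < ε := hε
      rw [hre]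
      exact neg_nonpos.2 (by positivity)
    · refine inv_anti₀ (abs_pos.2 ha) ?_
      simpa using Complex.abs_im_le_norm (ε + Complex.I * a)
  · have hb0 : ((0 : ℝ) : ℂ) + Complex.I * a ≠ 0 := by simpa using ha
    have hcont : ContinuousAt (fun ε : ℝ => (ε + Complex.I * a)⁻¹ *
        Complex.exp (-(Real.pi * ‖w + k • ρ‖ ^ 2 / (ε + Complex.I * a))) * g ρ) 0 := by
      fun_prop (disch := exact hb0)
    simpa using hcont.tendsto.mono_left nhdsWithin_le_nhds

/-- The Fresnel limit of `integral_gaussian_mul_integral`. -/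
theorem integral_chirp_mul_integral {a : ℝ} (ha : a ≠ 0) (k : ℝ) (w : Plane) {g : Plane → ℂ}
    (hg : Integrable g)
    (hG : Integrable fun x : Plane =>
      ∫ ρ : Plane, Complex.exp (2 * Real.pi * Complex.I * ⟪x, ρ⟫ * k) * g ρ) :
    ∫ x : Plane, Complex.exp (-(Real.pi * (Complex.I * a) * ‖x‖ ^ 2)) *
        Complex.exp (2 * Real.pi * Complex.I * ⟪w, x⟫) *
        ∫ ρ : Plane, Complex.exp (2 * Real.pi * Complex.I * ⟪x, ρ⟫ * k) * g ρ =
      ∫ ρ : Plane,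
        (Complex.I * a)⁻¹ * Complex.exp (-(Real.pi * ‖w + k • ρ‖ ^ 2 / (Complex.I * a))) * g ρ := by
  refine tendsto_nhds_unique (tendsto_integral_gaussian_regularization a w hG)
    ((tendsto_integral_gaussian_inv_regularization ha k w hg).congr' ?_)
  filter_upwards [self_mem_nhdsWithin] with ε hε
  exact (integral_gaussian_mul_integral (by simpa using hε) k w hg).symm

/-- The quadratic phases of the two transformations add up to that of the composite. -/
theorem phase_add_phase (β : ℝ) {β' : ℝ} (hβ' : β' ≠ 0) (x y : Plane) :
    -(‖x‖ ^ 2 * (Real.cosh β' / Real.sinh β')) +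
        ‖(Real.sinh β')⁻¹ • x + (Real.cosh β)⁻¹ • y‖ ^ 2 /
          (Real.cosh (β - β') / (Real.sinh β' * Real.cosh β)) - ‖y‖ ^ 2 * Real.tanh β =
      ‖x‖ ^ 2 * Real.tanh (β - β') - ‖y‖ ^ 2 * Real.tanh (β - β') +
        2 * ⟪x, y⟫ / Real.cosh (β - β') := by
  have hs : Real.sinh β' ≠ 0 := Real.sinh_ne_zero.2 hβ'
  have hc : Real.cosh β ≠ 0 := (Real.cosh_pos β).ne'
  have hd : Real.cosh (β - β') ≠ 0 := (Real.cosh_pos _).ne'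
  have hx : Real.cosh β - Real.cosh β' * Real.cosh (β - β') =
      Real.sinh β' * Real.sinh (β - β') := by
    have h := Real.cosh_add β' (β - β')
    rw [add_sub_cancel] at h
    linarith
  have hy : Real.sinh β' - Real.sinh β * Real.cosh (β - β') =
      -(Real.cosh β * Real.sinh (β - β')) := by
    have h := Real.sinh_sub β (β - β')
    rw [sub_sub_cancel] at h
    linarith
  rw [norm_add_sq_real, norm_smul, norm_smul, real_inner_smul_left, real_inner_smul_right, mul_pow,
    mul_pow, Real.norm_eq_abs, Real.norm_eq_abs, sq_abs, sq_abs, Real.tanh_eq_sinh_div_cosh,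
    Real.tanh_eq_sinh_div_cosh]
  field_simp
  linear_combination ‖x‖ ^ 2 * Real.cosh β * hx + ‖y‖ ^ 2 * Real.sinh β' * hy

/-- `H_{β'} ∘ K_β = e^(2β')·K_{β−β'}` on Schwartz functions. -/
theorem stmt11 (β β' : ℝ) (hβ' : β' ≠ 0)
    (f : SchwartzMap Plane ℂ) (ρ'' : Plane) :
    fracH β' (fun ρ' => fracK β (⇑f) ρ') ρ'' =
      Real.exp (2 * β') * fracK (β - β') (⇑f) ρ'' := by
  have hs : Real.sinh β' ≠ 0 := Real.sinh_ne_zero.2 hβ'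
  have hc : Real.cosh β ≠ 0 := (Real.cosh_pos β).ne'
  have hd : Real.cosh (β - β') ≠ 0 := (Real.cosh_pos _).ne'
  obtain ⟨a, ha_def⟩ : ∃ a, a = Real.cosh (β - β') / (Real.sinh β' * Real.cosh β) := ⟨_, rfl⟩
  have ha : a ≠ 0 := ha_def ▸ div_ne_zero hd (mul_ne_zero hs hc)
  have hcoth : Real.cosh β' / Real.sinh β' = a + Real.tanh β := by
    rw [ha_def, Real.tanh_eq_sinh_div_cosh, Real.cosh_sub]
    field_simp
    ring
  have hpair := integral_chirp_mul_integral ha (Real.cosh β)⁻¹ ((Real.sinh β')⁻¹ • ρ'')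
    (SchwartzMap.integrable (μ := volume) (SchwartzMap.smulLeftCLM ℂ
      (fun x : Plane => Complex.exp (-(Complex.I * Real.pi * ‖x‖ ^ 2 * Real.tanh β))) f))
  simp only [SchwartzMap.smulLeftCLM_apply_apply (hasTemperateGrowth_chirp _), smul_eq_mul] at hpair
  replace hpair := hpair (integrable_integral_chirp _ (inv_ne_zero hc) f)
  have hinner : ∫ x : Plane,
      Complex.exp (-(Complex.I * Real.pi * ‖x‖ ^ 2 * (Real.cosh β' / Real.sinh β'))) *
        Complex.exp (2 * Real.pi * Complex.I * ⟪ρ'', x⟫ / Real.sinh β') * fracK β f x =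
      Complex.I * Real.exp β / Real.cosh β * ∫ ρ : Plane, (Complex.I * a)⁻¹ *
        Complex.exp (-(Real.pi * ‖(Real.sinh β')⁻¹ • ρ'' + (Real.cosh β)⁻¹ • ρ‖ ^ 2 /
          (Complex.I * a))) *
        (Complex.exp (-(Complex.I * Real.pi * ‖ρ‖ ^ 2 * Real.tanh β)) * f ρ) := by
    rw [← hpair, ← integral_const_mul]
    congr 1
    funext x
    have hchirp : Complex.exp (-(Real.pi * (Complex.I * a) * ‖x‖ ^ 2)) =
        Complex.exp (-(Complex.I * Real.pi * ‖x‖ ^ 2 * (Real.cosh β' / Real.sinh β'))) *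
          Complex.exp (Complex.I * Real.pi * ‖x‖ ^ 2 * Real.tanh β) := by
      rw [← Complex.exp_add, ← Complex.ofReal_div, hcoth]
      congr 1
      push_cast
      ring
    have hker : ∫ ρ : Plane, Complex.exp (-(Complex.I * Real.pi * ‖ρ‖ ^ 2 * Real.tanh β)) *
          Complex.exp (2 * Real.pi * Complex.I * ⟪x, ρ⟫ / Real.cosh β) * f ρ =
        ∫ ρ : Plane, Complex.exp (2 * Real.pi * Complex.I * ⟪x, ρ⟫ * ((Real.cosh β)⁻¹ : ℝ)) *
          (Complex.exp (-(Complex.I * Real.pi * ‖ρ‖ ^ 2 * Real.tanh β)) * f ρ) := by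
      congr 1
      funext ρ
      rw [Complex.ofReal_inv, ← div_eq_mul_inv]
      ring
    have hchar : Complex.exp (2 * Real.pi * Complex.I * ⟪(Real.sinh β')⁻¹ • ρ'', x⟫) =
        Complex.exp (2 * Real.pi * Complex.I * ⟪ρ'', x⟫ / Real.sinh β') := by
      rw [real_inner_smul_left]
      congr 1
      push_cast
      ring
    rw [fracK, hker, hchirp, hchar]
    ring
  have hphase (ρ : Plane) :
      Complex.exp (-(Complex.I * Real.pi * ‖ρ''‖ ^ 2 * (Real.cosh β' / Real.sinh β'))) *
        Complex.exp (-(Real.pi * ‖(Real.sinh β')⁻¹ • ρ'' + (Real.cosh β)⁻¹ • ρ‖ ^ 2 /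
          (Complex.I * a))) *
        Complex.exp (-(Complex.I * Real.pi * ‖ρ‖ ^ 2 * Real.tanh β)) =
      Complex.exp (Complex.I * Real.pi * ‖ρ''‖ ^ 2 * Real.tanh (β - β')) *
        Complex.exp (-(Complex.I * Real.pi * ‖ρ‖ ^ 2 * Real.tanh (β - β'))) *
        Complex.exp (2 * Real.pi * Complex.I * ⟪ρ'', ρ⟫ / Real.cosh (β - β')) := by
    have h := congrArg (fun t : ℝ => Complex.I * Real.pi * (t : ℂ)) (phase_add_phase β hβ' ρ'' ρ)
    simp only [← ha_def, Complex.ofReal_add, Complex.ofReal_sub, Complex.ofReal_neg,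
      Complex.ofReal_mul, Complex.ofReal_div, Complex.ofReal_pow, Complex.ofReal_ofNat] at h
    have hI : (Real.pi * (‖(Real.sinh β')⁻¹ • ρ'' + (Real.cosh β)⁻¹ • ρ‖ : ℂ) ^ 2 /
        (Complex.I * a)) = -(Complex.I * Real.pi *
          ((‖(Real.sinh β')⁻¹ • ρ'' + (Real.cosh β)⁻¹ • ρ‖ : ℂ) ^ 2 / a)) := by
      rw [div_mul_eq_div_div, Complex.div_I]
      ring
    rw [← Complex.exp_add, ← Complex.exp_add, ← Complex.exp_add, ← Complex.exp_add, hI]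
    congr 1
    linear_combination h
  have hconst : Complex.I * Real.exp β' / Real.sinh β' * (Complex.I * Real.exp β / Real.cosh β) *
      (Complex.I * a)⁻¹ =
      Real.exp (2 * β') * (Complex.I * Real.exp (β - β') / Real.cosh (β - β')) := by
    have hexp : (Real.exp β' * Real.exp β : ℂ) = Real.exp (2 * β') * Real.exp (β - β') := by
      rw [← Complex.ofReal_mul, ← Complex.ofReal_mul, ← Real.exp_add, ← Real.exp_add]
      ring_nf
    have hsC := Complex.ofReal_ne_zero.2 hs
    have hcC := Complex.ofReal_ne_zero.2 hc
    have hdC := Complex.ofReal_ne_zero.2 hd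
    rw [ha_def, Complex.ofReal_div, Complex.ofReal_mul]
    generalize (Real.sinh β' : ℂ) = s at *
    generalize (Real.cosh β : ℂ) = c at *
    generalize (Real.cosh (β - β') : ℂ) = d at *
    field_simp
    linear_combination hexp
  rw [fracH, hinner, fracK]
  simp_rw [← integral_const_mul]
  congr 1
  funext ρ
  linear_combination
    (Complex.I * Real.exp β' / Real.sinh β' * (Complex.I * Real.exp β / Real.cosh β) *
      (Complex.I * a)⁻¹ * f ρ) * hphase ρ +
    (Complex.exp (Complex.I * Real.pi * ‖ρ''‖ ^ 2 * Real.tanh (β - β')) *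
        Complex.exp (-(Complex.I * Real.pi * ‖ρ‖ ^ 2 * Real.tanh (β - β'))) *
        Complex.exp (2 * Real.pi * Complex.I * ⟪ρ'', ρ⟫ / Real.cosh (β - β')) * f ρ) * hconst

end
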